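/- Let X be a tree and let Γ₀ be a group acting on X by graph automorphisms, freely and without inversions. Let D be a set of vertices of X containing exactly one vertex of each Γ₀-orbit and inducing a connected subgraph of X, and let x₀ ∈ D. Let F = {γ ∈ Γ₀ \ {1} : some vertex of D is adjacent in X to some vertex of γ·D}, and let D₁ be the union of the sets γ·D over γ ∈ F ∪ {1}. Let σ : Γ₀ → Aut(X) be a group homomorphism such that σ(γ)·x = γ·x for every γ ∈ F and every vertex x ∈ D₁. Then: (i) σ is injective; (ii) there exists a graph automorphism f of X with f(x₀) = x₀ and f(γ·x) = σ(γ)·f(x) for every γ ∈ Γ₀ and every vertex x; (iii) consequently, d(x₀, σ(γ)·x₀) = d(x₀, γ·x₀) and λ(σ(γ)) = λ(γ) for every γ ∈ Γ₀, and the group σ(Γ₀) acts freely and without inversions on X with D containing exactly one vertex of each σ(Γ₀)-orbit. -/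

import Mathlib

open SimpleGraph

/-- The translation length of a self-map `f` of the vertex set of a graph `G`:
`λ(f) = min over vertices v of d(v, f v)`. -/
noncomputable def translationLength {V : Type*} (G : SimpleGraph V) (f : V → V) : ℕ :=
  ⨅ v : V, G.dist v (f v)

/-- A homomorphism that is injective on neighbourhoods maps paths to paths when its target is
acyclic. -/
theorem SimpleGraph.Walk.IsPath.map_of_locally_injective {V W : Type*} {G : SimpleGraph V}
    {H : SimpleGraph W} (hH : H.IsAcyclic) (f : G →g H)
    (hinj : ∀ u v w, G.Adj u v → G.Adj u w → f v = f w → v = w)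
    {u v : V} {p : G.Walk u v} (hp : p.IsPath) : (p.map f).IsPath := by
  rw [hH.isPath_iff_isChain]
  induction p with
  | nil => simp
  | cons h q ih =>
    have hq := ih hp.of_cons
    cases q with
    | nil => simp
    | @cons _ b _ h' r =>
      simp only [Walk.map_cons, Walk.edges_cons, List.isChain_cons_cons] at hq ⊢
      refine ⟨fun he => ?_, hq⟩
      rw [Sym2.eq_swap, Sym2.congr_right] at he
      have hab := hinj _ _ _ h.symm h' he
      subst hab
      simp at hp

/-- A homomorphism from a connected graph to a tree that is bijective on neighbourhoods is an
isomorphism. -/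
theorem SimpleGraph.Hom.exists_iso_of_locally_bijective {V W : Type*} {G : SimpleGraph V}
    {H : SimpleGraph W} (hG : G.Connected) (hH : H.IsTree) (f : G →g H)
    (hinj : ∀ u v w, G.Adj u v → G.Adj u w → f v = f w → v = w)
    (hsurj : ∀ u y, H.Adj (f u) y → ∃ v, G.Adj u v ∧ f v = y) :
    ∃ e : G ≃g H, ∀ x, e x = f x := by
  have hf_inj : Function.Injective f := by
    intro u v huv
    obtain ⟨p, hp⟩ := (hG u v).exists_isPath
    have hmap := hp.map_of_locally_injective hH.isAcyclic f hinj
    rw [← Walk.isPath_copy _ rfl huv.symm, Walk.isPath_iff_nil, ← Walk.length_eq_zero_iff,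
      Walk.length_copy, Walk.length_map] at hmap
    exact Walk.eq_of_length_eq_zero hmap
  have hf_surj : Function.Surjective f := by
    have hwalk : ∀ {a b : W}, H.Walk a b → a ∈ Set.range f → b ∈ Set.range f := by
      intro a b p
      induction p with
      | nil => exact id
      | cons h _ ih =>
        rintro ⟨u, rfl⟩
        obtain ⟨v, -, hv⟩ := hsurj u _ h
        exact ih ⟨v, hv⟩
    obtain ⟨u⟩ := hG.nonempty
    intro y
    obtain ⟨p⟩ := hH.connected (f u) y
    exact hwalk p ⟨u, rfl⟩
  refine ⟨⟨Equiv.ofBijective f ⟨hf_inj, hf_surj⟩, fun {u v} => ⟨fun h => ?_, f.map_adj⟩⟩,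
    fun _ => rfl⟩
  obtain ⟨w, huw, hw⟩ := hsurj u _ h
  exact hf_inj hw ▸ huw

/-- Graph isomorphisms preserve distances. -/
theorem SimpleGraph.Connected.dist_iso {V W : Type*} {G : SimpleGraph V} {H : SimpleGraph W}
    (hG : G.Connected) (e : G ≃g H) (u v : V) : H.dist (e u) (e v) = G.dist u v := by
  have hH : H.Connected := e.connected_iff.mp hG
  apply le_antisymm
  · obtain ⟨p, hp⟩ := hG.exists_walk_length_eq_dist u v
    rw [← hp, ← Walk.length_map e.toHom p]
    exact dist_le _
  · obtain ⟨p, hp⟩ := hH.exists_walk_length_eq_dist (e u) (e v)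
    have := dist_le (p.map e.symm.toHom)
    simpa [hp] using this

/-- **Lemme 5.2** (unit edge-length form): a deformation `σ : Γ → Aut(X)` of a free
action without inversions of `Γ` on a tree `X` which agrees with the original action on
a neighbourhood `D₁` of a connected fundamental domain `D` is injective, is implemented
by a `σ`-equivariant automorphism of `X` fixing `x₀`, and hence preserves displacements
and translation lengths, and `σ(Γ)` again acts freely and without inversions with `D` as
fundamental domain. -/
theorem stmt_8 {V : Type*} (G : SimpleGraph V) (hG : G.IsTree)
    {Γ : Type*} [Group Γ] [MulAction Γ V]
    (hact : ∀ (γ : Γ) (u v : V), G.Adj u v → G.Adj (γ • u) (γ • v))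
    (hfree : ∀ γ : Γ, γ ≠ 1 → ∀ v : V, γ • v ≠ v)
    (hninv : ∀ γ : Γ, γ ≠ 1 → ∀ u v : V, G.Adj u v → ¬(γ • u = v ∧ γ • v = u))
    (D : Set V)
    (hDorb : ∀ v : V, ∃! w : V, w ∈ D ∧ w ∈ MulAction.orbit Γ v)
    (hDconn : (G.induce D).Connected)
    (x₀ : V) (hx₀ : x₀ ∈ D)
    (F : Set Γ)
    (hF : F = {γ : Γ | γ ≠ 1 ∧ ∃ u ∈ D, ∃ w ∈ D, G.Adj u (γ • w)})
    (D₁ : Set V)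
    (hD₁ : D₁ = {x : V | ∃ γ : Γ, (γ ∈ F ∨ γ = 1) ∧ ∃ w ∈ D, x = γ • w})
    (σ : Γ →* (G ≃g G))
    (hσ : ∀ γ ∈ F, ∀ x ∈ D₁, σ γ x = γ • x) :
    Function.Injective σ ∧
    (∃ f : G ≃g G, f x₀ = x₀ ∧ ∀ (γ : Γ) (x : V), f (γ • x) = σ γ (f x)) ∧
    (∀ γ : Γ, G.dist x₀ (σ γ x₀) = G.dist x₀ (γ • x₀) ∧
      translationLength G (σ γ) = translationLength G (fun v => γ • v)) ∧
    (∀ γ : Γ, γ ≠ 1 →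
      (∀ v : V, σ γ v ≠ v) ∧
      (∀ u v : V, G.Adj u v → ¬(σ γ u = v ∧ σ γ v = u))) ∧
    (∀ v : V, ∃! w : V, w ∈ D ∧ ∃ γ : Γ, σ γ v = w) := by
  have hrep : ∀ v : V, ∃ p : Γ × V, p.2 ∈ D ∧ p.1 • p.2 = v := by
    intro v
    obtain ⟨w, ⟨hw, γ, rfl⟩, -⟩ := hDorb v
    exact ⟨(γ⁻¹, γ • v), hw, inv_smul_smul γ v⟩
  have hcancel : ∀ {γ δ : Γ} {v : V}, γ • v = δ • v → γ = δ := by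
    intro γ δ v h
    by_contra hne
    refine hfree (δ⁻¹ * γ) (fun h1 => hne (inv_mul_eq_one.mp h1).symm) v ?_
    rw [mul_smul, h, inv_smul_smul]
  have hunique : ∀ {γ δ : Γ} {v w : V}, v ∈ D → w ∈ D → γ • v = δ • w → γ = δ ∧ v = w := by
    intro γ δ v w hv hw h
    have hvw : v = w := (hDorb v).unique ⟨hv, MulAction.mem_orbit_self v⟩
      ⟨hw, δ⁻¹ * γ, by simp [mul_smul, h]⟩
    subst hvw
    exact ⟨hcancel h, rfl⟩
  choose rep hrepD hrep_smul using hrep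
  let φ : V → V := fun v => σ (rep v).1 (rep v).2
  have hφ_smul_mem : ∀ (γ : Γ) {w : V}, w ∈ D → φ (γ • w) = σ γ w := by
    intro γ w hw
    obtain ⟨h1, h2⟩ := hunique (hrepD (γ • w)) hw (hrep_smul (γ • w))
    simp only [φ, h1, h2]
  have hφ_mem : ∀ {w : V}, w ∈ D → φ w = w := by
    intro w hw
    simpa using hφ_smul_mem 1 hw
  have hφ_smul : ∀ (γ : Γ) (v : V), φ (γ • v) = σ γ (φ v) := by
    intro γ v
    rw [← hrep_smul v, ← mul_smul, hφ_smul_mem _ (hrepD v), hφ_smul_mem _ (hrepD v), map_mul]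
    rfl
  have hφ_nbr : ∀ {w y : V}, w ∈ D → G.Adj w y → φ y = y := by
    intro w y hw hwy
    have hmem := hrepD y
    have hsmul := hrep_smul y
    generalize rep y = p at hmem hsmul
    obtain ⟨γ, w'⟩ := p
    subst hsmul
    rw [hφ_smul_mem γ hmem]
    by_cases hγ : γ = 1
    · simp [hγ]
    · refine hσ γ (hF ▸ ⟨hγ, w, hw, w', hmem, hwy⟩) w' (hD₁ ▸ ⟨1, Or.inr rfl, w', hmem, ?_⟩)
      rw [one_smul]
  have hnbr_base : ∀ {γ : Γ} {w y : V}, G.Adj (γ • w) y → ∃ z, G.Adj w z ∧ γ • z = y := by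
    intro γ w y h
    refine ⟨γ⁻¹ • y, ?_, smul_inv_smul γ y⟩
    simpa using hact γ⁻¹ _ _ h
  have hφ_adj : ∀ {u v : V}, G.Adj u v → G.Adj (φ u) (φ v) := by
    intro u v h
    rw [← hrep_smul u] at h ⊢
    obtain ⟨z, hz, rfl⟩ := hnbr_base h
    rw [hφ_smul, hφ_smul, hφ_mem (hrepD u), hφ_nbr (hrepD u) hz]
    exact (σ _).map_adj_iff.mpr hz
  obtain ⟨f, hf⟩ := SimpleGraph.Hom.exists_iso_of_locally_bijective hG.connected hG
    (⟨φ, hφ_adj⟩ : G →g G)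
    (by
      intro u v w huv huw h
      rw [← hrep_smul u] at huv huw
      obtain ⟨y, hy, rfl⟩ := hnbr_base huv
      obtain ⟨z, hz, rfl⟩ := hnbr_base huw
      change φ _ = φ _ at h
      rw [hφ_smul, hφ_smul, hφ_nbr (hrepD u) hy, hφ_nbr (hrepD u) hz] at h
      rw [(σ _).injective h])
    (by
      intro u y h
      change G.Adj (σ (rep u).1 (rep u).2) y at h
      have hz : G.Adj (rep u).2 ((σ (rep u).1).symm y) := by
        rw [← (σ (rep u).1).map_adj_iff]
        simpa using h
      refine ⟨(rep u).1 • (σ (rep u).1).symm y, ?_, ?_⟩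
      · simpa only [hrep_smul] using hact (rep u).1 _ _ hz
      · change φ _ = y
        rw [hφ_smul, hφ_nbr (hrepD u) hz]
        simp)
  replace hf : ∀ x, f x = φ x := hf
  have hf_smul : ∀ (γ : Γ) (x : V), f (γ • x) = σ γ (f x) := by
    intro γ x
    rw [hf, hf, hφ_smul]
  have hf_mem : ∀ {w : V}, w ∈ D → f w = w := fun hw => (hf _).trans (hφ_mem hw)
  have hdist := hG.connected.dist_iso f
  refine ⟨?_, ⟨f, hf_mem hx₀, hf_smul⟩, fun γ => ⟨?_, ?_⟩, fun γ hγ => ⟨?_, ?_⟩, ?_⟩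
  · intro γ δ h
    apply hcancel (v := x₀)
    apply f.injective
    rw [hf_smul, hf_smul, h]
  · rw [← hdist x₀ (γ • x₀), hf_smul, hf_mem hx₀]
  · refine (Equiv.iInf_congr f.toEquiv fun v => ?_).symm
    change G.dist (f v) (σ γ (f v)) = _
    rw [← hf_smul, hdist]
  · intro v h
    obtain ⟨x, rfl⟩ := f.surjective v
    rw [← hf_smul] at h
    exact hfree γ hγ x (f.injective h)
  · rintro u v huv ⟨h1, h2⟩
    obtain ⟨x, rfl⟩ := f.surjective u
    obtain ⟨y, rfl⟩ := f.surjective v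
    rw [← hf_smul] at h1 h2
    exact hninv γ hγ x y (f.map_adj_iff.mp huv) ⟨f.injective h1, f.injective h2⟩
  · intro v
    obtain ⟨x, rfl⟩ := f.surjective v
    obtain ⟨w, ⟨hw, γ, hγ⟩, huniq⟩ := hDorb x
    refine ⟨w, ⟨hw, γ, ?_⟩, ?_⟩
    · rw [← hf_smul, ← hf_mem hw]
      exact congrArg f hγ
    · rintro w' ⟨hw', δ, hδ⟩
      refine huniq w' ⟨hw', δ, f.injective ?_⟩
      rw [hf_mem hw', ← hδ]
      exact hf_smul δ x
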